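/- arXiv:math/0009151 — 3 statements merged into one kernel-verified Lean document; each statement's English description precedes it below -/
import Mathlib

section
/- For every integer n ≥ 1 and every integer k, the maps w_n and t_{k(n+1),kn} ∘ w_n, both viewed as continuous maps from the annulus A into X̂, are homotopic rel ∂A; that is, there is a continuous H : A × [0,1] → X̂ with H(·,0) = w_n, H(·,1) = t_{k(n+1),kn} ∘ w_n, and H(a,t) = w_n(a) for all a ∈ ∂A and all t ∈ [0,1]. -/
open Real Set

noncomputable section

/-- The solid region `X = [-1,1] × [-1,1] × S¹`. -/
def Xset : Set (ℝ × ℝ × Circle) := Icc (-1) 1 ×ˢ Icc (-1) 1 ×ˢ univ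

/-- The middle solid torus `[-1/3,1/3] × [-1/3,1/3] × S¹`. -/
def midTorus : Set (ℝ × ℝ × Circle) := Icc (-(1/3)) (1/3) ×ˢ Icc (-(1/3)) (1/3) ×ˢ univ

/-- `X̂ = X ∖ midTorus`. -/
def Xhat : Set (ℝ × ℝ × Circle) := Xset \ midTorus

/-- The annulus `A = [-1,1] × S¹`. -/
def Aset : Set (ℝ × Circle) := Icc (-1) 1 ×ˢ univ

/-- The boundary `∂A = {-1,1} × S¹`. -/
def bdryA : Set (ℝ × Circle) := ({-1, 1} : Set ℝ) ×ˢ univ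

/-- The wrapping maps `w_n : A → X` (defined by the same formulas on all of `ℝ × S¹`). -/
noncomputable def w (n : ℕ) (p : ℝ × Circle) : ℝ × ℝ × Circle :=
  if n = 0 then (p.1, -(1/2), p.2)
  else if p.1 ≤ -(1/3) then (3/2 * p.1 + 1/2, -(1/2), p.2)
  else if p.1 ≤ 1/3 then
    (-(1/2) * Real.sin (π * ((n : ℝ) * (3 * p.1 + 1) - 1)),
      1/2 * Real.cos (π * ((n : ℝ) * (3 * p.1 + 1) - 1)), p.2)
  else (3/2 * p.1 - 1/2, -(1/2), p.2)

/-- The Dehn-twist homeomorphisms `t_{n,m} : X̂ → X̂` (defined by the same formulas on all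
of `ℝ × ℝ × S¹`). -/
noncomputable def tw (n m : ℤ) (p : ℝ × ℝ × Circle) : ℝ × ℝ × Circle :=
  if 1/3 ≤ |p.1| then p
  else if 1/3 < p.2.1 then (p.1, p.2.1, Circle.exp (3 * (n : ℝ) * π * (p.1 + 1/3)) * p.2.2)
  else (p.1, p.2.1, Circle.exp (3 * (m : ℝ) * π * (p.1 + 1/3)) * p.2.2)

/-- Clamping to `[-r, r]`. -/
def clampR (r x : ℝ) : ℝ := max (-r) (min r x)

lemma clampR_cont (r : ℝ) : Continuous (clampR r) := by
  unfold clampR; fun_prop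

lemma clampR_low {r x : ℝ} (hr : 0 ≤ r) (h : x ≤ -r) : clampR r x = -r := by
  unfold clampR; rw [min_eq_right (by linarith), max_eq_left h]

lemma clampR_high {r x : ℝ} (hr : 0 ≤ r) (h : r ≤ x) : clampR r x = r := by
  unfold clampR; rw [min_eq_left h, max_eq_right (by linarith)]

lemma clampR_mid {r x : ℝ} (h1 : -r ≤ x) (h2 : x ≤ r) : clampR r x = x := by
  unfold clampR; rw [min_eq_right h2, max_eq_right h1]

/-- Clamped twisting parameter, in `[0, 2/3]`. -/
def cc (a : ℝ) : ℝ := clampR (1/3) a + 1/3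

lemma cc_cont : Continuous cc := by
  unfold cc; exact (clampR_cont _).add continuous_const

/-- A continuous step from `0` to `-2π`. -/
def stepF (y : ℝ) : ℝ := 3 * π * (cc (-(1/2) * Real.sin (clampR (π/2) y)) - 2/3)

lemma stepF_cont : Continuous stepF := by
  unfold stepF
  have := clampR_cont (π/2)
  have := cc_cont
  fun_prop

lemma stepF_low {y : ℝ} (h : y ≤ -(π/2)) : stepF y = 0 := by
  unfold stepF cc
  rw [clampR_low (by positivity) h, Real.sin_neg, Real.sin_pi_div_two,
    clampR_high (by norm_num) (by norm_num)]
  ring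

lemma stepF_high {y : ℝ} (h : π/2 ≤ y) : stepF y = -(2 * π) := by
  unfold stepF cc
  rw [clampR_high (by positivity) h, Real.sin_pi_div_two,
    clampR_low (by norm_num) (by norm_num)]
  ring

lemma stepF_mid {y : ℝ} (h1 : -(π/2) ≤ y) (h2 : y ≤ π/2) :
    stepF y = 3 * π * cc (-(1/2) * Real.sin y) - 2 * π := by
  unfold stepF
  rw [clampR_mid h1 h2]
  ring

lemma stepF_mem {y : ℝ} (h : y ≤ -(π/2) ∨ π/2 ≤ y) :
    stepF y ∈ AddSubgroup.zmultiples (2 * π) := by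
  rcases h with h | h
  · rw [stepF_low h]; exact zero_mem _
  · rw [stepF_high h]; exact neg_mem (AddSubgroup.mem_zmultiples _)

lemma sum_bot (n : ℕ) (s : ℝ) (hs : Real.cos s ≤ 0) :
    ∃ m : ℤ, ∑ j ∈ Finset.range n, stepF (s - j * (2 * π)) = m * (2 * π) := by
  have : ∑ j ∈ Finset.range n, stepF (s - j * (2 * π)) ∈ AddSubgroup.zmultiples (2 * π) := by
    refine sum_mem fun j _ => stepF_mem ?_
    by_contra! hc
    have h2 := Real.cos_pos_of_mem_Ioo ⟨hc.1, hc.2⟩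
    rw [Real.cos_sub_nat_mul_two_pi] at h2
    linarith
  obtain ⟨m, hm⟩ := AddSubgroup.mem_zmultiples_iff.1 this
  exact ⟨m, by rw [← hm]; simp⟩

lemma sum_top (n : ℕ) (s : ℝ) (hs : 0 < Real.cos s) (h1 : -π ≤ s) (h2 : s ≤ 2 * π * n - π) :
    ∃ m : ℤ, ∑ j ∈ Finset.range n, stepF (s - j * (2 * π))
      = 3 * π * cc (-(1/2) * Real.sin s) + m * (2 * π) := by
  have hpi := Real.pi_pos
  obtain ⟨i, hi⟩ : ∃ i : ℤ, |s - i * (2 * π)| ≤ π := by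
    refine ⟨round (s / (2 * π)), ?_⟩
    have h := abs_sub_round (s / (2 * π))
    have : s - round (s / (2 * π)) * (2 * π) = (s / (2 * π) - round (s / (2 * π))) * (2 * π) := by
      field_simp
    rw [this, abs_mul, abs_of_pos (by positivity : 0 < 2 * π)]
    nlinarith
  have hc : Real.cos (s - i * (2 * π)) = Real.cos s := Real.cos_sub_int_mul_two_pi _ _
  have hlt : |s - i * (2 * π)| < π / 2 := by
    by_contra! hh
    have := Real.cos_nonpos_of_pi_div_two_le_of_le hh (by linarith)
    rw [Real.cos_abs] at this
    linarith
  rw [abs_lt] at hlt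
  have hi0 : 0 ≤ i := by
    have : (-1 : ℝ) < i := by
      by_contra! hh
      nlinarith
    have : (-1 : ℤ) < i := by exact_mod_cast this
    omega
  obtain ⟨j, rfl⟩ := Int.eq_ofNat_of_zero_le hi0
  have hjn : j < n := by
    have : (j : ℝ) < n := by
      by_contra! hh
      push_cast at hlt
      nlinarith
    exact_mod_cast this
  push_cast at hlt hc
  rw [← Finset.add_sum_erase _ _ (Finset.mem_range.2 hjn), stepF_mid (by linarith) (by linarith),
    Real.sin_sub_nat_mul_two_pi]
  have : ∑ l ∈ (Finset.range n).erase j, stepF (s - l * (2 * π))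
      ∈ AddSubgroup.zmultiples (2 * π) := by
    refine sum_mem fun l hl => stepF_mem ?_
    rcases lt_or_gt_of_ne (Finset.ne_of_mem_erase hl) with h | h
    · right
      have : (l : ℝ) + 1 ≤ j := by exact_mod_cast h
      nlinarith
    · left
      have : (j : ℝ) + 1 ≤ l := by exact_mod_cast h
      nlinarith
  obtain ⟨m, hm⟩ := AddSubgroup.mem_zmultiples_iff.1 this
  refine ⟨m - 1, ?_⟩
  rw [← hm]; push_cast; simp; ring

/-- Angle on the wrapping circle. -/
def sang (n : ℕ) (x : ℝ) : ℝ := π * ((n : ℝ) * (3 * clampR (1/3) x + 1) - 1)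

/-- First coordinate of `w`. -/
def aco (n : ℕ) (x : ℝ) : ℝ := -(1/2) * Real.sin (sang n x) + 3/2 * (x - clampR (1/3) x)

/-- Second coordinate of `w`. -/
def bco (n : ℕ) (x : ℝ) : ℝ := 1/2 * Real.cos (sang n x)

lemma sang_cont (n : ℕ) : Continuous (sang n) := by
  unfold sang
  have := clampR_cont (1/3)
  fun_prop

lemma aco_cont (n : ℕ) : Continuous (aco n) := by
  unfold aco
  have := clampR_cont (1/3)
  have := sang_cont n
  fun_prop

lemma bco_cont (n : ℕ) : Continuous (bco n) := by
  unfold bco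
  have := sang_cont n
  fun_prop

lemma sang_low (n : ℕ) {x : ℝ} (h : x ≤ -(1/3)) : sang n x = -π := by
  unfold sang; rw [clampR_low (by norm_num) h]; ring

lemma sang_high (n : ℕ) {x : ℝ} (h : 1/3 ≤ x) : sang n x = -π + n * (2 * π) := by
  unfold sang; rw [clampR_high (by norm_num) h]; ring

lemma co_low (n : ℕ) {x : ℝ} (h : x ≤ -(1/3)) :
    aco n x = 3/2 * x + 1/2 ∧ bco n x = -(1/2) ∧ Real.cos (sang n x) = -1 := by
  unfold aco bco
  rw [sang_low n h, clampR_low (by norm_num) h]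
  simp
  ring

lemma co_high (n : ℕ) {x : ℝ} (h : 1/3 ≤ x) :
    aco n x = 3/2 * x - 1/2 ∧ bco n x = -(1/2) ∧ Real.cos (sang n x) = -1 := by
  unfold aco bco
  rw [sang_high n h, clampR_high (by norm_num) h, Real.sin_add_nat_mul_two_pi,
    Real.cos_add_nat_mul_two_pi]
  simp
  ring

lemma aco_mid (n : ℕ) {x : ℝ} (h1 : -(1/3) ≤ x) (h2 : x ≤ 1/3) :
    aco n x = -(1/2) * Real.sin (sang n x) := by
  unfold aco
  rw [clampR_mid h1 h2]; ring

lemma w_eq (n : ℕ) (hn : 1 ≤ n) (p : ℝ × Circle) : w n p = (aco n p.1, bco n p.1, p.2) := by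
  unfold w
  rw [if_neg (by omega)]
  split_ifs with h1 h2
  · rw [(co_low n h1).1, (co_low n h1).2.1]
  · rw [aco_mid n (by linarith) h2]
    unfold bco sang
    rw [clampR_mid (by linarith) h2]
  · rw [(co_high n (by linarith)).1, (co_high n (by linarith)).2.1]

/-- Either we are on the bottom line or on the circle of radius 1/2. -/
lemma co_cases (n : ℕ) (x : ℝ) :
    (bco n x = -(1/2) ∧ Real.cos (sang n x) = -1) ∨
    (aco n x = -(1/2) * Real.sin (sang n x) ∧ aco n x ^ 2 + bco n x ^ 2 = 1/4) := by
  rcases le_total x (-(1/3)) with h | h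
  · exact Or.inl (co_low n h).2
  rcases le_total (1/3) x with h' | h'
  · exact Or.inl (co_high n h').2
  · right
    have := aco_mid n h h'
    refine ⟨this, ?_⟩
    rw [this]; unfold bco
    nlinarith [Real.sin_sq_add_cos_sq (sang n x)]

lemma mem_Xhat (n : ℕ) {x : ℝ} (h1 : -1 ≤ x) (h2 : x ≤ 1) (z : Circle) :
    (aco n x, bco n x, z) ∈ Xhat := by
  have hb1 : -1 ≤ bco n x := by unfold bco; linarith [Real.neg_one_le_cos (sang n x)]
  have hb2 : bco n x ≤ 1 := by unfold bco; linarith [Real.cos_le_one (sang n x)]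
  have ha : -1 ≤ aco n x ∧ aco n x ≤ 1 := by
    rcases le_total x (-(1/3)) with h | h
    · rw [(co_low n h).1]; constructor <;> linarith
    rcases le_total (1/3) x with h' | h'
    · rw [(co_high n h').1]; constructor <;> linarith
    · rw [aco_mid n h h']
      constructor <;> linarith [Real.neg_one_le_sin (sang n x), Real.sin_le_one (sang n x)]
  refine ⟨⟨ha, ⟨hb1, hb2⟩, trivial⟩, ?_⟩
  rintro ⟨⟨h3, h4⟩, ⟨h5, h6⟩, -⟩
  simp only at h3 h4 h5 h6
  rcases co_cases n x with h | h
  · linarith [h.1]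
  · nlinarith [h.2]

/-- The lift of the twisting angle divided by `k`. -/
def phi (n : ℕ) (x : ℝ) : ℝ :=
  n * (3 * π * cc (aco n x)) + ∑ j ∈ Finset.range n, stepF (sang n x - j * (2 * π))

lemma phi_cont (n : ℕ) : Continuous (phi n) := by
  unfold phi
  have := aco_cont n
  have := sang_cont n
  have := cc_cont
  have := stepF_cont
  fun_prop

lemma phi_neg_one (n : ℕ) : phi n (-1) = 0 := by
  have hpi := Real.pi_pos
  unfold phi
  rw [(co_low n (by norm_num)).1, sang_low n (by norm_num)]
  rw [Finset.sum_eq_zero]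
  · unfold cc; rw [clampR_low (by norm_num) (by norm_num)]; ring
  · intro j _
    refine stepF_low ?_
    have : (0 : ℝ) ≤ j := Nat.cast_nonneg j
    nlinarith

lemma phi_one (n : ℕ) : phi n 1 = 0 := by
  have hpi := Real.pi_pos
  unfold phi
  rw [(co_high n (by norm_num)).1, sang_high n (by norm_num)]
  rw [Finset.sum_congr rfl (g := fun _ => -(2 * π))]
  · unfold cc; rw [clampR_high (by norm_num) (by norm_num)]; simp; ring
  · intro j hj
    refine stepF_high ?_
    have : (j : ℝ) + 1 ≤ n := by exact_mod_cast Finset.mem_range.1 hj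
    nlinarith

lemma sang_range (n : ℕ) (x : ℝ) : -π ≤ sang n x ∧ sang n x ≤ 2 * π * n - π := by
  have hpi := Real.pi_pos
  have h1 : -(1/3) ≤ clampR (1/3) x := le_max_left _ _
  have h2 : clampR (1/3) x ≤ 1/3 := max_le (by norm_num) (min_le_left _ _)
  have hn : (0:ℝ) ≤ n := Nat.cast_nonneg n
  unfold sang
  have h3 : 0 ≤ π * n * (3 * clampR (1/3) x + 1) := by
    apply mul_nonneg (by positivity); linarith
  have h4 : 0 ≤ π * n * (1 - 3 * clampR (1/3) x) := by
    apply mul_nonneg (by positivity); linarith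
  constructor <;> nlinarith

lemma exp_eq_of {a b : ℝ} (m : ℤ) (h : a = b + m * (2 * π)) : Circle.exp a = Circle.exp b := by
  rw [Circle.exp_eq_exp]; exact ⟨m, h⟩

lemma cc_big {a : ℝ} (h : 1/3 ≤ |a|) : ∃ m : ℤ, 3 * π * cc a = m * (2 * π) := by
  unfold cc
  rcases le_abs.1 h with h | h
  · exact ⟨1, by rw [clampR_high (by norm_num) h]; push_cast; ring⟩
  · exact ⟨0, by rw [clampR_low (by norm_num) (by linarith)]; push_cast; ring⟩

lemma cc_small {a : ℝ} (h : |a| < 1/3) : cc a = a + 1/3 := by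
  unfold cc
  rw [abs_lt] at h
  rw [clampR_mid h.1.le h.2.le]

lemma tw_eq (n : ℕ) (k : ℤ) (x : ℝ) (z : Circle) :
    tw (k * ((n : ℤ) + 1)) (k * (n : ℤ)) (aco n x, bco n x, z) =
      (aco n x, bco n x, Circle.exp (k * phi n x) * z) := by
  unfold tw
  dsimp only
  have hr := sang_range n x
  split_ifs with h1 h2
  · obtain ⟨m, hm⟩ := cc_big h1
    obtain ⟨l, hl⟩ : ∃ l : ℤ, ∑ j ∈ Finset.range n, stepF (sang n x - j * (2 * π))
        = l * (2 * π) := by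
      rcases le_or_gt (Real.cos (sang n x)) 0 with hc | hc
      · exact sum_bot n _ hc
      · obtain ⟨l, hl⟩ := sum_top n _ hc hr.1 hr.2
        rcases co_cases n x with h | h
        · linarith [h.2]
        · rw [← h.1, hm] at hl
          exact ⟨m + l, by rw [hl]; push_cast; ring⟩
    have : Circle.exp (k * phi n x) = Circle.exp 0 := by
      refine exp_eq_of (k * (n * m + l)) ?_
      unfold phi; rw [hm, hl]; push_cast; ring
    rw [this, Circle.exp_zero, one_mul]
  · have hc : 0 < Real.cos (sang n x) := by unfold bco at h2; linarith
    obtain ⟨l, hl⟩ := sum_top n _ hc hr.1 hr.2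
    rcases co_cases n x with h | h
    · linarith [h.2]
    rw [← h.1] at hl
    congr 3
    symm
    refine exp_eq_of (k * l) ?_
    unfold phi; rw [hl, cc_small (not_le.1 h1)]; push_cast; ring
  · have hc : Real.cos (sang n x) ≤ 0 := by
      rcases co_cases n x with h | h
      · linarith [h.2]
      · by_contra! hc
        have hb : 0 < bco n x := by unfold bco; linarith
        have h1 := abs_lt.1 (not_le.1 h1)
        nlinarith [h.2]
    obtain ⟨l, hl⟩ := sum_bot n _ hc
    congr 3
    symm
    refine exp_eq_of (k * l) ?_
    unfold phi; rw [hl, cc_small (not_le.1 h1)]; push_cast; ring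

/-- Lemma 3.1 of the paper: for every `n ≥ 1` and every integer `k`, the maps `w_n` and
`t_{k(n+1),kn} ∘ w_n`, viewed as maps of the annulus `A` into `X̂`, are homotopic rel `∂A`. -/
theorem stmt2 (n : ℕ) (hn : 1 ≤ n) (k : ℤ) :
    ∃ H : (ℝ × Circle) × ℝ → ℝ × ℝ × Circle,
      ContinuousOn H (Aset ×ˢ Icc (0:ℝ) 1) ∧
      (∀ q ∈ Aset ×ˢ Icc (0:ℝ) 1, H q ∈ Xhat) ∧
      (∀ p ∈ Aset, H (p, 0) = w n p) ∧
      (∀ p ∈ Aset, H (p, 1) = tw (k * ((n : ℤ) + 1)) (k * (n : ℤ)) (w n p)) ∧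
      (∀ p ∈ bdryA, ∀ t ∈ Icc (0:ℝ) 1, H (p, t) = w n p) := by
  refine ⟨fun q => (aco n q.1.1, bco n q.1.1, Circle.exp (q.2 * (k * phi n q.1.1)) * q.1.2),
    ?_, ?_, ?_, ?_, ?_⟩
  · apply Continuous.continuousOn
    have := aco_cont n
    have := bco_cont n
    have := phi_cont n
    fun_prop
  · rintro ⟨⟨x, z⟩, t⟩ ⟨⟨⟨h1, h2⟩, -⟩, -⟩
    exact mem_Xhat n h1 h2 _
  · rintro ⟨x, z⟩ -
    simp [w_eq n hn]
  · rintro ⟨x, z⟩ -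
    rw [w_eq n hn, tw_eq]
    simp
  · rintro ⟨x, z⟩ ⟨hx, -⟩ t -
    have : phi n x = 0 := by
      rcases hx with h | h
      · simp only at h; rw [h, phi_neg_one]
      · simp only [mem_singleton_iff] at h; rw [h, phi_one]
    simp [w_eq n hn, this]
end
end

section
/- Let n ≥ 1 and let P = {(x,θ) ∈ A : the first coordinate of w_n(x,θ) lies in [−1/3,1/3]}. Then there exist real numbers −1 ≤ a_0 < b_0 < a_1 < b_1 < ⋯ < a_{2n} < b_{2n} ≤ 1 such that P = ⋃_{j=0}^{2n} [a_j,b_j] × S¹; moreover, for every even j the second coordinate of w_n is ≤ −1/3 at every point of [a_j,b_j] × S¹ (giving n+1 sub-annuli mapping into the lower half of the middle third of X̂), and for every odd j the second coordinate of w_n is ≥ 1/3 at every point of [a_j,b_j] × S¹ (giving n sub-annuli mapping into the upper half). -/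
open Real Set

noncomputable section

/-- The half-width parameter. -/
def sW : ℝ := arcsin (2/3) / π

lemma sW_pos : 0 < sW := div_pos (arcsin_pos.2 (by norm_num)) pi_pos

lemma sW_lt : sW < 1/2 := by
  unfold sW
  rw [div_lt_iff₀ pi_pos]
  have : arcsin (2/3) < π / 2 := arcsin_lt_pi_div_two.2 (by norm_num)
  linarith

lemma sin_abs_le_iff (u : ℝ) (hu : |u| ≤ 1/2) : |sin (π * u)| ≤ 2/3 ↔ |u| ≤ sW := by
  have hp := pi_pos
  obtain ⟨h1, h2⟩ := abs_le.1 hu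
  have m1 : -(π/2) ≤ π * u := by nlinarith
  have m2 : π * u ≤ π/2 := by nlinarith
  rw [abs_le, abs_le, ← le_arcsin_iff_sin_le ⟨m1, m2⟩ (by constructor <;> norm_num),
    ← arcsin_le_iff_le_sin (by constructor <;> norm_num) ⟨m1, m2⟩, arcsin_neg]
  unfold sW
  rw [le_div_iff₀ hp, ← neg_div, div_le_iff₀ hp, mul_comm u]

lemma cos_ge_of (u : ℝ) (hu : |u| ≤ sW) : 2/3 ≤ cos (π * u) := by
  have hp := pi_pos
  have hu2 : |u| ≤ 1/2 := hu.trans sW_lt.le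
  have hs := (sin_abs_le_iff u hu2).2 hu
  obtain ⟨h1, h2⟩ := abs_le.1 hu2
  have hc : 0 ≤ cos (π * u) := cos_nonneg_of_mem_Icc ⟨by nlinarith, by nlinarith⟩
  have := sin_sq_add_cos_sq (π * u)
  have h3 := sq_le_sq' (abs_le.1 hs).1 (abs_le.1 hs).2
  nlinarith

lemma keyM (t : ℝ) (j : ℕ) (h : |t - j| ≤ sW) :
    |sin (π * t)| ≤ 2/3 ∧ (Even j → 2/3 ≤ cos (π * t)) ∧ (Odd j → cos (π * t) ≤ -(2/3)) := by
  have e : π * t = π * (t - j) + j * π := by ring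
  have hs := (sin_abs_le_iff _ (h.trans sW_lt.le)).2 h
  have hc := cos_ge_of _ h
  rw [e, sin_add_nat_mul_pi, cos_add_nat_mul_pi]
  refine ⟨by simpa [abs_mul] using hs, fun hj => by simpa [hj.neg_one_pow] using hc,
    fun hj => ?_⟩
  rw [hj.neg_one_pow]; linarith

lemma keyN (n : ℕ) (t : ℝ) (h0 : 0 ≤ t) (h1 : t ≤ 2 * n) (h : |sin (π * t)| ≤ 2/3) :
    ∃ j : ℕ, j ≤ 2 * n ∧ |t - j| ≤ sW := by
  have hr := abs_sub_round t
  obtain ⟨r1, r2⟩ := abs_le.1 hr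
  have k0 : 0 ≤ round t := by
    have : (-1 : ℝ) < round t := by linarith
    have : (-1 : ℤ) < round t := by exact_mod_cast this
    omega
  have k1 : round t ≤ 2 * n := by
    have : (round t : ℝ) < 2 * n + 1 := by linarith
    have : round t < 2 * n + 1 := by exact_mod_cast this
    omega
  obtain ⟨j, hj⟩ := Int.eq_ofNat_of_zero_le k0
  rw [hj] at hr k1
  push_cast at hr
  refine ⟨j, by omega, ?_⟩
  rw [← sin_abs_le_iff _ hr]
  have e : π * t = π * (t - j) + j * π := by ring
  rw [e, sin_add_nat_mul_pi] at h
  simpa [abs_mul] using h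

/-- Left end points. -/
def aW (n j : ℕ) : ℝ := if j = 0 then -(5/9) else ((j - sW) / n - 1) / 3

/-- Right end points. -/
def bW (n j : ℕ) : ℝ := if j = 2 * n then 5/9 else ((j + sW) / n - 1) / 3

lemma end_le (n : ℕ) (hn : 1 ≤ n) (c x : ℝ) : (c / n - 1) / 3 ≤ x ↔ c ≤ n * (3 * x + 1) := by
  have : (0 : ℝ) < n := by exact_mod_cast hn
  rw [div_le_iff₀ (by norm_num), sub_le_iff_le_add, div_le_iff₀ this]
  constructor <;> intro h <;> linarith

lemma le_end (n : ℕ) (hn : 1 ≤ n) (c x : ℝ) : x ≤ (c / n - 1) / 3 ↔ n * (3 * x + 1) ≤ c := by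
  have : (0 : ℝ) < n := by exact_mod_cast hn
  rw [le_div_iff₀ (by norm_num), le_sub_iff_add_le, le_div_iff₀ this]
  constructor <;> intro h <;> linarith

lemma mem_iff (n : ℕ) (hn : 1 ≤ n) (j : ℕ) (hj : j ≤ 2 * n) (x : ℝ) :
    x ∈ Icc (aW n j) (bW n j) ↔ (x ≤ -(1/3) ∧ -(5/9) ≤ x ∧ j = 0) ∨
      ((-(1/3) ≤ x ∧ x ≤ 1/3) ∧ |n * (3 * x + 1) - j| ≤ sW) ∨
      (1/3 ≤ x ∧ x ≤ 5/9 ∧ j = 2 * n) := by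
  have hn' : (1 : ℝ) ≤ n := by exact_mod_cast hn
  have s0 := sW_pos
  have s1 := sW_lt
  have hA : aW n j ≤ x ↔ (j = 0 ∧ -(5/9) ≤ x) ∨ (1 ≤ j ∧ (j - sW) ≤ n * (3 * x + 1)) := by
    unfold aW
    split_ifs with h
    · simp [h]
    · rw [end_le n hn]; simp [h]; omega
  have hB : x ≤ bW n j ↔ (j = 2 * n ∧ x ≤ 5/9) ∨ (j + 1 ≤ 2 * n ∧ n * (3 * x + 1) ≤ j + sW) := by
    unfold bW
    split_ifs with h
    · simp [h]
    · rw [le_end n hn]; simp [h]; omega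
  have c1 : x ≤ -(1/3) → n * (3 * x + 1) ≤ 0 := fun h => by nlinarith
  have c2 : -(1/3) ≤ x → 0 ≤ n * (3 * x + 1) := fun h => by nlinarith
  have c3 : x ≤ 1/3 → n * (3 * x + 1) ≤ 2 * n := fun h => by nlinarith
  have c4 : 1/3 ≤ x → 2 * n ≤ n * (3 * x + 1) := fun h => by nlinarith
  rw [mem_Icc, hA, hB, abs_le]
  generalize (n : ℝ) * (3 * x + 1) = t at *
  have j0 : (0 : ℝ) ≤ j := by positivity
  have jn : (j : ℝ) ≤ 2 * n := by exact_mod_cast hj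
  have j1 : 1 ≤ j → (1 : ℝ) ≤ j := fun h => by exact_mod_cast h
  have j2 : j + 1 ≤ 2 * n → (j : ℝ) + 1 ≤ 2 * n := fun h => by exact_mod_cast h
  have j3 : j = 0 → (j : ℝ) = 0 := fun h => by exact_mod_cast h
  have j4 : j = 2 * n → (j : ℝ) = 2 * n := fun h => by exact_mod_cast h
  have d0 : j = 0 ∨ 1 ≤ j := by omega
  have d1 : j = 2 * n ∨ j + 1 ≤ 2 * n := by omega
  constructor
  · rintro ⟨hL, hR⟩
    rcases le_total x (-(1/3)) with hx | hx
    · left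
      rcases hL with ⟨h, h'⟩ | ⟨h, h'⟩
      · exact ⟨hx, h', h⟩
      · have := c1 hx; have := j1 h; linarith
    rcases le_total x (1/3) with hx' | hx'
    · right; left
      have := c2 hx
      have := c3 hx'
      refine ⟨⟨hx, hx'⟩, ?_, ?_⟩
      · rcases hL with ⟨h, h'⟩ | ⟨h, h'⟩
        · have := j3 h; linarith
        · linarith
      · rcases hR with ⟨h, h'⟩ | ⟨h, h'⟩
        · have := j4 h; linarith
        · linarith
    · right; right
      rcases hR with ⟨h, h'⟩ | ⟨h, h'⟩
      · exact ⟨hx', h', h⟩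
      · have := c4 hx'; have := j2 h; linarith
  · rintro (⟨h1, h2, h3⟩ | ⟨⟨h1, h2⟩, h3, h4⟩ | ⟨h1, h2, h3⟩)
    · refine ⟨Or.inl ⟨h3, h2⟩, Or.inr ⟨by omega, ?_⟩⟩
      have := c1 h1; linarith
    · constructor
      · rcases d0 with d | d
        · exact Or.inl ⟨d, by linarith⟩
        · exact Or.inr ⟨d, by linarith⟩
      · rcases d1 with d | d
        · exact Or.inl ⟨d, by linarith⟩
        · exact Or.inr ⟨d, by linarith⟩
    · refine ⟨Or.inr ⟨by omega, ?_⟩, Or.inl ⟨h3, h2⟩⟩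
      have := c4 h1; linarith

lemma w_left (n : ℕ) (hn : 1 ≤ n) (p : ℝ × Circle) (h : p.1 ≤ -(1/3)) :
    w n p = (3/2 * p.1 + 1/2, -(1/2), p.2) := by
  unfold w
  rw [if_neg (by omega), if_pos h]

lemma w_mid (n : ℕ) (hn : 1 ≤ n) (p : ℝ × Circle) (h : -(1/3) ≤ p.1) (h' : p.1 ≤ 1/3) :
    w n p = (1/2 * sin (π * (n * (3 * p.1 + 1))), -(1/2) * cos (π * (n * (3 * p.1 + 1))), p.2) := by
  rcases h.eq_or_lt with h | h
  · rw [w_left n hn p h.symm.le, ← h]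
    norm_num
  · unfold w
    rw [if_neg (by omega), if_neg (by linarith), if_pos h', mul_sub, mul_one, sin_sub_pi,
      cos_sub_pi]
    simp

lemma w_right (n : ℕ) (hn : 1 ≤ n) (p : ℝ × Circle) (h : 1/3 ≤ p.1) :
    w n p = (3/2 * p.1 - 1/2, -(1/2), p.2) := by
  rcases h.eq_or_lt with h | h
  · rw [w_mid n hn p (by linarith) h.symm.le, ← h]
    have e : π * (n * (3 * (1/3) + 1)) = n * (2 * π) := by ring
    have e2 : sin (n * (2 * π)) = 0 := by
      have := sin_nat_mul_pi (2 * n)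
      push_cast at this
      rw [← this]; ring_nf
    rw [e, cos_nat_mul_two_pi, e2]
    norm_num
  · unfold w
    rw [if_neg (by omega), if_neg (by linarith), if_neg (by linarith)]

/-- The structural claim in the proof of Lemma 3.1: for `n ≥ 1`, the part of the annulus `A`
that `w_n` maps into the middle third of `X̂` (first coordinate in `[-1/3,1/3]`) is a union
of `2n+1` essential sub-annuli `[a_j,b_j] × S¹` of `A`, occurring in order; the `n+1`
even-indexed ones map into the lower half (`y ≤ -1/3`) and the `n` odd-indexed ones map
into the upper half (`y ≥ 1/3`). -/
theorem stmt3 (n : ℕ) (hn : 1 ≤ n) :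
    ∃ a b : ℕ → ℝ,
      -1 ≤ a 0 ∧ b (2 * n) ≤ 1 ∧
      (∀ j ≤ 2 * n, a j < b j) ∧
      (∀ j < 2 * n, b j < a (j + 1)) ∧
      ({p ∈ Aset | (w n p).1 ∈ Icc (-(1/3)) (1/3)} =
        ⋃ j ∈ Finset.range (2 * n + 1), Icc (a j) (b j) ×ˢ (univ : Set Circle)) ∧
      (∀ j ≤ 2 * n, Even j →
        ∀ p ∈ Icc (a j) (b j) ×ˢ (univ : Set Circle), (w n p).2.1 ≤ -(1/3)) ∧
      (∀ j ≤ 2 * n, Odd j →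
        ∀ p ∈ Icc (a j) (b j) ×ˢ (univ : Set Circle), 1/3 ≤ (w n p).2.1) := by
  have hn' : (1 : ℝ) ≤ n := by exact_mod_cast hn
  have s0 := sW_pos
  have s1 := sW_lt
  refine ⟨aW n, bW n, ?_, ?_, ?_, ?_, ?_, ?_, ?_⟩
  · norm_num [aW]
  · norm_num [bW]
  · intro j hj
    have jn : (j : ℝ) ≤ 2 * n := by exact_mod_cast hj
    have j0 : (0 : ℝ) ≤ j := by positivity
    unfold aW bW
    split_ifs with h1 h2 h2
    · norm_num
    · rw [← not_le, end_le n hn]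
      nlinarith
    · rw [← not_le, le_end n hn]
      nlinarith
    · have : (0 : ℝ) < n := by linarith
      gcongr
      linarith
  · intro j hj
    have : (0 : ℝ) < n := by linarith
    unfold aW bW
    rw [if_neg (by omega), if_neg (by omega)]
    push_cast
    have h : ((j : ℝ) + sW) / n < ((j : ℝ) + 1 - sW) / n :=
      div_lt_div_of_pos_right (by linarith) this
    linarith
  · ext p
    simp only [mem_ofPred_eq, mem_iUnion, Finset.mem_range, mem_prod, mem_univ, and_true,
      exists_prop, Aset]
    constructor
    · rintro ⟨⟨hl, hr⟩, hw⟩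
      rcases le_total p.1 (-(1/3)) with hx | hx
      · rw [w_left n hn p hx] at hw
        refine ⟨0, by omega, (mem_iff n hn 0 (by omega) _).2 (Or.inl ⟨hx, ?_, rfl⟩)⟩
        have := hw.1
        simp only at this
        linarith
      rcases le_total p.1 (1/3) with hx' | hx'
      · rw [w_mid n hn p hx hx'] at hw
        obtain ⟨h1, h2⟩ := hw
        simp only at h1 h2
        obtain ⟨j, hj, h⟩ := keyN n (n * (3 * p.1 + 1)) (by nlinarith) (by nlinarith)
          (abs_le.2 ⟨by linarith, by linarith⟩)
        exact ⟨j, by omega, (mem_iff n hn j hj _).2 (Or.inr (Or.inl ⟨⟨hx, hx'⟩, h⟩))⟩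
      · rw [w_right n hn p hx'] at hw
        refine ⟨2 * n, by omega, (mem_iff n hn _ le_rfl _).2 (Or.inr (Or.inr ⟨hx', ?_, rfl⟩))⟩
        have := hw.2
        simp only at this
        linarith
    · rintro ⟨j, hj, h⟩
      rcases (mem_iff n hn j (by omega) _).1 h with ⟨h1, h2, h3⟩ | ⟨⟨h1, h2⟩, h3⟩ | ⟨h1, h2, h3⟩
      · rw [w_left n hn p h1]
        exact ⟨⟨by linarith, by linarith⟩, by simp only; linarith, by simp only; linarith⟩
      · rw [w_mid n hn p h1 h2]
        have := abs_le.1 (keyM _ j h3).1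
        exact ⟨⟨by linarith, by linarith⟩, by simp only; linarith, by simp only; linarith⟩
      · rw [w_right n hn p h1]
        exact ⟨⟨by linarith, by linarith⟩, by simp only; linarith, by simp only; linarith⟩
  · intro j hj he p hp
    rcases (mem_iff n hn j hj _).1 hp.1 with ⟨h1, h2, h3⟩ | ⟨⟨h1, h2⟩, h3⟩ | ⟨h1, h2, h3⟩
    · rw [w_left n hn p h1]; norm_num
    · rw [w_mid n hn p h1 h2]
      have := (keyM _ j h3).2.1 he
      simp only; linarith
    · rw [w_right n hn p h1]; norm_num
  · intro j hj ho p hp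
    rcases (mem_iff n hn j hj _).1 hp.1 with ⟨h1, h2, h3⟩ | ⟨⟨h1, h2⟩, h3⟩ | ⟨h1, h2, h3⟩
    · exact absurd ho (by rw [h3]; simp)
    · rw [w_mid n hn p h1 h2]
      have := (keyM _ j h3).2.2 ho
      simp only; linarith
    · exact absurd ho (by rw [h3]; simp)
end
end

section
/- Let d ≥ 1 and let M be a nonempty Hausdorff topological space equipped with a charted-space structure over the d-dimensional Euclidean half-space H^d = {x ∈ ℝ^d : x_d ≥ 0} (so every point of M has a chart which is a homeomorphism from an open neighborhood onto an open subset of H^d), with associated model with corners I (Mathlib's 𝓡∂ d), and let int M denote the manifold interior of M, namely the set of points x ∈ M whose image under the chart at x lies in the topological interior of the range of I. Then for every point x ∈ M and every neighborhood W of x there exists a neighborhood V of x with V ⊆ W such that V ∩ int M is nonempty and connected. -/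
open Set
open scoped Manifold

lemma aux_interp (d : ℕ) (t0 : ℝ) (ht0 : 0 < t0) :
    ∃ ts c : Fin (d+1) → ℝ, (∀ i, 0 < ts i ∧ ts i < t0) ∧ ∑ i, c i = 1 ∧
      ∀ A : EuclideanSpace ℝ (Fin d) →L[ℝ] EuclideanSpace ℝ (Fin d),
        (1 + A).det = ∑ i, c i * (1 + ts i • A).det := by
  let ts : Fin (d+1) → ℝ := fun i => t0 / ((i : ℕ) + 2)
  have hinj : Function.Injective ts := by
    intro i j h
    simp only [ts] at h
    have h1 : (0:ℝ) < (i : ℕ) + 2 := by positivity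
    have h2 : (0:ℝ) < (j : ℕ) + 2 := by positivity
    rw [div_eq_div_iff h1.ne' h2.ne'] at h
    have := mul_left_cancel₀ ht0.ne' h
    ext
    have h3 : ((j : ℕ) : ℝ) = ((i : ℕ) : ℝ) := by linarith
    exact_mod_cast h3.symm
  have hpoly : ∀ p : Polynomial ℝ, p.natDegree ≤ d →
      p.eval 1 = ∑ i, (Lagrange.basis Finset.univ ts i).eval 1 * p.eval (ts i) := by
    intro p hp
    have hdeg : p.degree < ((Finset.univ : Finset (Fin (d+1))).card : WithBot ℕ) := by
      simp only [Finset.card_univ, Fintype.card_fin]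
      refine lt_of_le_of_lt Polynomial.degree_le_natDegree ?_
      exact_mod_cast Nat.lt_succ_of_le hp
    have := Lagrange.eq_interpolate (s := Finset.univ) (v := ts) hinj.injOn hdeg
    conv_lhs => rw [this]
    rw [Lagrange.interpolate_apply, Polynomial.eval_finsetSum]
    refine Finset.sum_congr rfl fun i _ => ?_
    simp [mul_comm]
  refine ⟨ts, fun i => (Lagrange.basis Finset.univ ts i).eval 1, ?_, ?_, ?_⟩
  · intro i
    refine ⟨by positivity, ?_⟩
    simp only [ts]
    rw [div_lt_iff₀ (by positivity)]
    have : (0:ℝ) ≤ (i : ℕ) := by positivity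
    nlinarith
  · have := hpoly 1 (by simp)
    simpa using this.symm
  · intro A
    let b := (EuclideanSpace.basisFun (Fin d) ℝ).toBasis
    let N := LinearMap.toMatrix b b (A : EuclideanSpace ℝ (Fin d) →ₗ[ℝ] EuclideanSpace ℝ (Fin d))
    let p : Polynomial ℝ := Matrix.det ((Polynomial.X : Polynomial ℝ) • N.map Polynomial.C
      + (1 : Matrix (Fin d) (Fin d) ℝ).map Polynomial.C)
    have hp : p.natDegree ≤ d := by
      simpa only [Fintype.card_fin] using Polynomial.natDegree_det_X_add_C_le N 1
    have he : ∀ t : ℝ, p.eval t = (1 + t • A).det := by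
      intro t
      have h1 : (1 + t • A).det = Matrix.det (1 + t • N) := by
        rw [ContinuousLinearMap.det, ← LinearMap.det_toMatrix b]
        congr 1
        rw [ContinuousLinearMap.toLinearMap_add, ContinuousLinearMap.toLinearMap_smul, map_add,
          map_smul]
        congr 1
        exact LinearMap.toMatrix_one b
      rw [h1]
      simp only [p]
      rw [← Polynomial.coe_evalRingHom, RingHom.map_det]
      congr 1
      ext i j
      simp [Matrix.one_apply, add_comm]
      split_ifs <;> simp [mul_comm]
    have := hpoly p hp
    rw [he 1] at this
    simp only [he, one_smul] at this
    exact this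

lemma aux_no_retraction (d : ℕ) (f : EuclideanSpace ℝ (Fin d) → EuclideanSpace ℝ (Fin d))
    (hf : ContDiff ℝ 1 f) (hn : ∀ x, ‖f x‖ = 1) (hid : ∀ x, ‖x‖ = 1 → f x = x) : False := by
  let E := EuclideanSpace ℝ (Fin d)
  let B : Set E := Metric.ball 0 1
  let K : Set E := Metric.closedBall 0 1
  let h : E → E := fun x => f x - x
  have hh : ContDiff ℝ 1 h := hf.sub contDiff_id
  let A : E → E →L[ℝ] E := fderiv ℝ h
  have hAc : Continuous A := hh.continuous_fderiv (by norm_num)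
  have hder : ∀ x, HasFDerivAt h (A x) x := fun x =>
    (hh.differentiable (by norm_num) x).hasFDerivAt
  have hK : IsCompact K := isCompact_closedBall 0 1
  obtain ⟨C, hC⟩ := hK.exists_bound_of_continuousOn hAc.continuousOn
  have hCpos : 0 ≤ C := (norm_nonneg _).trans (hC 0 (by simp [K]))
  -- Lipschitz
  have hlip : ∀ x ∈ K, ∀ y ∈ K, ‖h y - h x‖ ≤ C * ‖y - x‖ := fun x hx y hy =>
    (convex_closedBall (0:E) 1).norm_image_sub_le_of_norm_fderiv_le
      (fun z _ => hh.differentiable (by norm_num) z) hC hx hy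
  -- determinant positive near identity
  have hdet1 : ∀ᶠ T : E →L[ℝ] E in nhds 0, 0 < (1 + T).det := by
    have hc : Continuous fun T : E →L[ℝ] E => (1 + T).det :=
      ContinuousLinearMap.continuous_det.comp (continuous_const.add continuous_id)
    refine hc.continuousAt.eventually (lt_mem_nhds ?_)
    simp [ContinuousLinearMap.det]
  obtain ⟨ε, hε, hdet⟩ := Metric.eventually_nhds_iff.1 hdet1
  let t0 : ℝ := min (ε / (C + 1)) (1 / (C + 1))
  have ht0 : 0 < t0 := by positivity
  have hvol : ∀ t, 0 < t → t < t0 →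
      ∫ x in B, (1 + t • A x).det = (MeasureTheory.volume B).toReal := by
    intro t ht htt
    have ht1 : t * (C + 1) < ε := by
      have := lt_of_lt_of_le htt (min_le_left _ _)
      rwa [lt_div_iff₀ (by positivity)] at this
    have ht2 : t * (C + 1) < 1 := by
      have := lt_of_lt_of_le htt (min_le_right _ _)
      rwa [lt_div_iff₀ (by positivity)] at this
    have htlt1 : t < 1 := by nlinarith
    let F : E → E := fun x => x + t • h x
    have hFc : Continuous F := continuous_id.add (hh.continuous.const_smul t)
    have hFd : ∀ x, HasStrictFDerivAt F (1 + t • A x) x := fun x =>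
      (hasStrictFDerivAt_id x).add
        ((hh.contDiffAt.hasStrictFDerivAt (by norm_num)).const_smul t)
    have hpos : ∀ x ∈ K, 0 < (1 + t • A x).det := by
      intro x hx
      apply hdet
      rw [dist_zero_right, norm_smul, Real.norm_of_nonneg ht.le]
      have := hC x hx
      nlinarith
    have hBK : B ⊆ K := Metric.ball_subset_closedBall
    have hinj : InjOn F K := by
      intro x hx y hy hxy
      have h1 : y - x = - (t • (h y - h x)) := by
        simp only [F] at hxy
        rw [smul_sub, neg_sub, sub_eq_sub_iff_add_eq_add]
        rw [hxy.symm, add_comm]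
      have h2 : ‖y - x‖ ≤ t * (C * ‖y - x‖) := by
        conv_lhs => rw [h1, norm_neg, norm_smul, Real.norm_of_nonneg ht.le]
        exact mul_le_mul_of_nonneg_left (hlip x hx y hy) ht.le
      have h3 : ‖y - x‖ = 0 := by
        have := norm_nonneg (y - x)
        by_contra hne
        have : 0 < ‖y - x‖ := lt_of_le_of_ne this (Ne.symm hne)
        nlinarith
      exact (sub_eq_zero.1 (norm_eq_zero.1 h3)).symm
    have hFB : ∀ x ∈ B, F x ∈ B := by
      intro x hx
      simp only [B, mem_ball_zero_iff] at hx ⊢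
      have h1 : F x = (1 - t) • x + t • f x := by
        simp only [F, h, smul_sub, sub_smul, one_smul]; abel
      rw [h1]
      calc _ ≤ ‖(1-t) • x‖ + ‖t • f x‖ := norm_add_le _ _
        _ = (1 - t) * ‖x‖ + t := by
          rw [norm_smul, norm_smul, hn, Real.norm_of_nonneg ht.le,
            Real.norm_of_nonneg (by linarith), mul_one]
        _ < 1 := by nlinarith
    have hFS : ∀ x, ‖x‖ = 1 → F x = x := by
      intro x hx
      simp [F, h, hid x hx]
    have himg : F '' B = B := by
      have hsub : F '' B ⊆ B := by rintro _ ⟨x, hx, rfl⟩; exact hFB x hx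
      have hopen : IsOpen (F '' B) := by
        rw [isOpen_iff_mem_nhds]
        rintro _ ⟨x, hx, rfl⟩
        have hs : LinearMap.range ((1 + t • A x : E →L[ℝ] E) : E →ₗ[ℝ] E) = ⊤ := by
          have := (LinearMap.equivOfDetNeZero ((1 + t • A x : E →L[ℝ] E) : E →ₗ[ℝ] E)
            (hpos x (hBK hx)).ne')
          exact LinearMap.range_eq_top.2 
            (LinearMap.equivOfDetNeZero ((1 + t • A x : E →L[ℝ] E) : E →ₗ[ℝ] E)
            (hpos x (hBK hx)).ne').surjective
        rw [← (hFd x).map_nhds_eq_of_surj hs]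
        exact Filter.image_mem_map (Metric.isOpen_ball.mem_nhds hx)
      have hcl : B ∩ closure (F '' B) ⊆ F '' B := by
        rintro y ⟨hy, hy2⟩
        have : y ∈ F '' K := by
          have hcK : IsClosed (F '' K) := (hK.image hFc).isClosed
          exact closure_minimal (image_mono hBK) hcK hy2
        obtain ⟨x, hx, rfl⟩ := this
        refine ⟨x, ?_, rfl⟩
        simp only [B, K, mem_ball_zero_iff, mem_closedBall_zero_iff] at hx hy ⊢
        refine lt_of_le_of_ne hx fun h1 => ?_
        rw [hFS x h1, h1] at hy
        exact lt_irrefl _ hy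
      refine hsub.antisymm ?_
      have hpre : IsPreconnected B := (convex_ball (0:E) 1).isPreconnected
      refine hpre.subset_of_closure_inter_subset hopen ⟨F 0, hFB 0 (by simp [B]), 0, by simp [B], rfl⟩ ?_
      rwa [inter_comm]
    have := MeasureTheory.integral_image_eq_integral_abs_det_fderiv_smul
      (MeasureTheory.volume) (s := B) Metric.isOpen_ball.measurableSet
      (fun x _ => (hFd x).hasFDerivAt.hasFDerivWithinAt) (hinj.mono hBK) (fun _ => (1:ℝ))
    rw [himg] at this
    have h2 : ∫ x in B, (1 + t • A x).det = ∫ x in B, |(1 + t • A x).det| • (1:ℝ) := by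
      refine MeasureTheory.setIntegral_congr_fun Metric.isOpen_ball.measurableSet fun x hx => ?_
      simp [abs_of_pos (hpos x (hBK hx))]
    rw [h2, ← this]
    simp [MeasureTheory.measureReal_def]
  obtain ⟨ts, c, hts, hc1, hint⟩ := aux_interp d t0 ht0
  have hzero : ∀ x, (1 + A x).det = 0 := by
    intro x
    by_contra hne
    have hfd : HasFDerivAt f (1 + A x) x := by
      have := (hasFDerivAt_id x).add (hder x)
      have he : f = (id : E → E) + h := by ext1 y; simp [h]
      rw [he]; exact this
    have hsurj := (LinearMap.equivOfDetNeZero ((1 + A x : E →L[ℝ] E) : E →ₗ[ℝ] E) hne).surjective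
    obtain ⟨v, hv⟩ := hsurj (f x)
    have hv : (1 + A x) v = f x := hv
    have h1 := hfd.inner ℝ hfd
    have h2 : HasFDerivAt (fun y => inner ℝ (f y) (f y)) (0 : E →L[ℝ] ℝ) x := by
      have : (fun y => inner ℝ (f y) (f y)) = fun _ => (1:ℝ) := by
        ext y; rw [real_inner_self_eq_norm_sq, hn]; norm_num
      rw [this]; exact hasFDerivAt_const _ _
    have h3 := congrArg (fun L => L v) (h1.unique h2)
    simp only [ContinuousLinearMap.comp_apply, ContinuousLinearMap.prod_apply,
      fderivInnerCLM_apply, hv, real_inner_self_eq_norm_sq, hn] at h3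
    norm_num at h3
  have hsum : ∫ x in B, (1 + A x).det = ∑ i, c i * ∫ x in B, (1 + ts i • A x).det := by
    rw [show (fun x => (1 + A x).det) = fun x => ∑ i, c i * (1 + ts i • A x).det from
      funext fun x => hint (A x)]
    rw [MeasureTheory.integral_finsetSum]
    · simp_rw [MeasureTheory.integral_const_mul]
    · intro i _
      have hcont : Continuous fun x => c i * (1 + ts i • A x).det :=
        continuous_const.mul (ContinuousLinearMap.continuous_det.comp
          (continuous_const.add (hAc.const_smul (ts i))))
      exact (hcont.continuousOn.integrableOn_compact hK).mono_set Metric.ball_subset_closedBall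
  simp_rw [hzero] at hsum
  have : ∑ i, c i * ∫ x in B, (1 + ts i • A x).det = (MeasureTheory.volume B).toReal := by
    rw [Finset.sum_congr rfl fun i _ => by rw [hvol (ts i) (hts i).1 (hts i).2],
      ← Finset.sum_mul, hc1, one_mul]
  rw [this] at hsum
  simp only [MeasureTheory.integral_zero] at hsum
  have hp : 0 < (MeasureTheory.volume B).toReal :=
    ENNReal.toReal_pos (Metric.measure_ball_pos _ _ one_pos).ne' MeasureTheory.measure_ball_lt_top.ne
  linarith

lemma aux_cont (d : ℕ) (G : EuclideanSpace ℝ (Fin d) → EuclideanSpace ℝ (Fin d))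
    (hG : Continuous G) (h0 : ∀ x, G x ≠ 0) (hid : ∀ x, 3/4 ≤ ‖x‖ → G x = x) : False := by
  obtain ⟨g, hg, hgd, hge, -⟩ := hG.exists_contDiff_approx_and_eqOn 1 (ε := fun x => ‖G x‖)
    hG.norm (fun x => norm_pos_iff.2 (h0 x)) (S := {x | 1 ≤ ‖x‖}) (U := {x | 3/4 < ‖x‖})
    (isClosed_le continuous_const continuous_norm)
    ((isOpen_lt continuous_const continuous_norm).mem_nhdsSet.2 (fun x (hx : 1 ≤ ‖x‖) => by
      show 3/4 < ‖x‖
      linarith))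
    (contDiff_id.contDiffOn.congr fun x (hx : 3/4 < ‖x‖) => hid x hx.le)
  have hg0 : ∀ x, g x ≠ 0 := by
    intro x hx
    have := hgd x
    rw [hx, dist_zero_left] at this
    exact lt_irrefl _ this
  refine aux_no_retraction d (fun x => ‖g x‖⁻¹ • g x) ?_ ?_ ?_
  · exact ((hg.norm ℝ hg0).inv fun x => norm_ne_zero_iff.2 (hg0 x)).smul hg
  · intro x
    rw [norm_smul, norm_inv, norm_norm, inv_mul_cancel₀ (norm_ne_zero_iff.2 (hg0 x))]
  · intro x hx
    have h1 : g x = x := (hge (show 1 ≤ ‖x‖ from hx.ge)).trans (hid x (by rw [hx]; norm_num))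
    simp [h1, hx]

lemma aux_ball (d : ℕ) (ψ : EuclideanSpace ℝ (Fin d) → EuclideanSpace ℝ (Fin d))
    (hψ : ContinuousOn ψ (Metric.closedBall 0 1)) (h0 : ∀ x ∈ Metric.closedBall 0 1, ψ x ≠ 0)
    (hcl : ∀ x ∈ Metric.closedBall 0 1, ‖ψ x - x‖ ≤ 1/4) : False := by
  let r : EuclideanSpace ℝ (Fin d) → EuclideanSpace ℝ (Fin d) := fun x => (max 1 ‖x‖)⁻¹ • x
  have hm : ∀ x : EuclideanSpace ℝ (Fin d), 0 < max 1 ‖x‖ := fun x =>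
    lt_of_lt_of_le one_pos (le_max_left _ _)
  have hrc : Continuous r :=
    ((continuous_const.max continuous_norm).inv₀ fun x => (hm x).ne').smul continuous_id
  have hr : ∀ x, r x ∈ Metric.closedBall (0 : EuclideanSpace ℝ (Fin d)) 1 := by
    intro x
    rw [mem_closedBall_zero_iff, norm_smul, norm_inv, Real.norm_of_nonneg (hm x).le,
      inv_mul_le_iff₀ (hm x), mul_one]
    exact le_max_right _ _
  have hr1 : ∀ x, ‖x‖ ≤ 1 → r x = x := by
    intro x hx; simp [r, max_eq_left hx]
  let c : EuclideanSpace ℝ (Fin d) → ℝ := fun x => max 0 (min 1 (3 - 4 * ‖x‖))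
  have hcc : Continuous c := by fun_prop
  have hc0 : ∀ x, 0 ≤ c x := fun x => le_max_left _ _
  have hc1 : ∀ x, c x ≤ 1 := fun x => max_le zero_le_one (min_le_left _ _)
  have hψr : Continuous fun x => ψ (r x) := hψ.comp_continuous hrc hr
  have hz : ∀ x : EuclideanSpace ℝ (Fin d), 3/4 ≤ ‖x‖ → c x = 0 := by
    intro x hx
    refine max_eq_left ((min_le_right _ _).trans (by linarith))
  refine aux_cont d (fun x => x + c x • (ψ (r x) - r x)) ?_ ?_ ?_
  · exact continuous_id.add (hcc.smul (hψr.sub hrc))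
  · intro x hx
    by_cases h1 : ‖x‖ ≤ 1/2
    · have : c x = 1 := by
        simp only [c]
        rw [min_eq_left (by linarith)]; norm_num
      rw [this, hr1 x (by linarith), one_smul, add_sub_cancel] at hx
      exact h0 x (by rw [mem_closedBall_zero_iff]; linarith) hx
    · have h2 : x = - (c x • (ψ (r x) - r x)) := eq_neg_of_add_eq_zero_left hx
      have h3 : ‖x‖ ≤ 1/4 := by
        rw [h2, norm_neg, norm_smul, Real.norm_of_nonneg (hc0 x)]
        have := hcl (r x) (hr x)
        nlinarith [hc0 x, hc1 x, norm_nonneg (ψ (r x) - r x)]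
      linarith
  · intro x hx
    simp [hz x hx]

lemma aux_key (d : ℕ) [NeZero d]
    (τ : OpenPartialHomeomorph (EuclideanHalfSpace d) (EuclideanHalfSpace d))
    (p : EuclideanHalfSpace d) (hp : p ∈ τ.source) (hp0 : 0 < p.val 0) : 0 < (τ p).val 0 := by
  by_contra hneg
  have hq0 : (τ p).val 0 = 0 := le_antisymm (not_lt.1 hneg) (τ p).2
  let J : (EuclideanSpace ℝ (Fin d)) → EuclideanHalfSpace d := (𝓡∂ d).symm
  have hJ : Continuous J := (𝓡∂ d).continuous_symm
  have hJv : ∀ y : (EuclideanSpace ℝ (Fin d)), 0 ≤ y 0 → (J y).val = y := fun y hy =>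
    (𝓡∂ d).right_inv (by rw [range_modelWithCornersEuclideanHalfSpace]; exact hy)
  have hJl : ∀ z : EuclideanHalfSpace d, J z.val = z := fun z => (𝓡∂ d).left_inv z
  have hval : Continuous (Subtype.val : EuclideanHalfSpace d → (EuclideanSpace ℝ (Fin d))) := continuous_subtype_val
  have hcoord : Continuous fun y : (EuclideanSpace ℝ (Fin d)) => y 0 := PiLp.continuous_apply 2 _ 0
  let S : Set (EuclideanSpace ℝ (Fin d)) := J ⁻¹' τ.source ∩ {y | 0 < y 0}
  have hS : IsOpen S := (τ.open_source.preimage hJ).inter (isOpen_lt continuous_const hcoord)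
  have hpS : p.val ∈ S := ⟨by simpa [hJl] using hp, hp0⟩
  obtain ⟨r, hr, hrS⟩ := Metric.nhds_basis_closedBall.mem_iff.1 (hS.mem_nhds hpS)
  let α : (EuclideanSpace ℝ (Fin d)) → (EuclideanSpace ℝ (Fin d)) := fun u => p.val + r • u
  have hα : Continuous α := by fun_prop
  have hαS : ∀ u ∈ Metric.closedBall (0:(EuclideanSpace ℝ (Fin d))) 1, α u ∈ S := by
    intro u hu
    apply hrS
    rw [mem_closedBall_zero_iff] at hu
    rw [mem_closedBall_iff_norm]
    simp only [α, add_sub_cancel_left, norm_smul, Real.norm_of_nonneg hr.le]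
    nlinarith
  let e0 : (EuclideanSpace ℝ (Fin d)) := EuclideanSpace.single 0 1
  let push : ℝ → EuclideanHalfSpace d → EuclideanHalfSpace d := fun t z => J (z.val + t • e0)
  let Φ : ℝ × (EuclideanSpace ℝ (Fin d)) → EuclideanHalfSpace d := fun w => push w.1 (τ (J (α w.2)))
  let Ψ : ℝ × (EuclideanSpace ℝ (Fin d)) → (EuclideanSpace ℝ (Fin d)) := fun w => r⁻¹ • ((τ.symm (Φ w)).val - p.val)
  have hΦ : ∀ w : ℝ × (EuclideanSpace ℝ (Fin d)), α w.2 ∈ S → ContinuousAt Φ w := by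
    intro w hw
    have h1 : ContinuousAt (fun w : ℝ × (EuclideanSpace ℝ (Fin d)) => τ (J (α w.2))) w :=
      ContinuousAt.comp (f := fun w : ℝ × (EuclideanSpace ℝ (Fin d)) => J (α w.2)) (τ.continuousAt hw.1)
        (hJ.comp (hα.comp continuous_snd)).continuousAt
    have h2 : ContinuousAt (fun w : ℝ × (EuclideanSpace ℝ (Fin d)) => (τ (J (α w.2))).val + w.1 • e0) w :=
      (hval.continuousAt.comp h1).add (continuousAt_fst.smul continuousAt_const)
    exact hJ.continuousAt.comp h2
  have hΨ : ∀ w : ℝ × (EuclideanSpace ℝ (Fin d)), α w.2 ∈ S → Φ w ∈ τ.target → ContinuousAt Ψ w := by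
    intro w hw hw2
    have h1 : ContinuousAt (fun w => τ.symm (Φ w)) w :=
      ContinuousAt.comp (τ.continuousAt_symm hw2) (hΦ w hw)
    exact ((hval.continuousAt.comp h1).sub continuousAt_const).const_smul r⁻¹
  have hev : ∀ᶠ t : ℝ in nhds 0, ∀ u ∈ Metric.closedBall (0:(EuclideanSpace ℝ (Fin d))) 1,
      Φ (t, u) ∈ τ.target ∧ ‖Ψ (t, u) - u‖ < 1/4 := by
    refine (isCompact_closedBall (0:(EuclideanSpace ℝ (Fin d))) 1).eventually_forall_of_forall_eventually
      (P := fun t u => Φ (t, u) ∈ τ.target ∧ ‖Ψ (t, u) - u‖ < 1/4) ?_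
    intro u hu
    have hus := hαS u hu
    have hΦ0 : Φ (0, u) = τ (J (α u)) := by simp [Φ, push, hJl]
    have hmem : Φ (0, u) ∈ τ.target := by rw [hΦ0]; exact τ.map_source hus.1
    have hΨ0 : Ψ (0, u) = u := by
      simp only [Ψ]
      rw [hΦ0, τ.left_inv hus.1, hJv _ hus.2.le]
      simp [α, smul_smul, inv_mul_cancel₀ hr.ne']
    have h1 := (hΦ (0, u) hus).eventually (τ.open_target.mem_nhds hmem)
    have h2 : ContinuousAt (fun w : ℝ × (EuclideanSpace ℝ (Fin d)) => ‖Ψ w - w.2‖) (0, u) :=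
      ((hΨ (0, u) hus hmem).sub continuousAt_snd).norm
    have h3 : ∀ᶠ w : ℝ × (EuclideanSpace ℝ (Fin d)) in nhds (0, u), ‖Ψ w - w.2‖ < 1/4 :=
      h2.eventually (gt_mem_nhds (by simp only [hΨ0, sub_self, norm_zero]; norm_num))
    exact h1.and h3
  have hev2 : ∀ᶠ t : ℝ in nhdsWithin 0 (Ioi 0), _ := hev.filter_mono nhdsWithin_le_nhds
  obtain ⟨t, ht, htpos⟩ := (hev2.and self_mem_nhdsWithin).exists
  refine aux_ball d (fun u => Ψ (t, u)) ?_ ?_ ?_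
  · intro u hu
    exact (ContinuousAt.comp (f := fun u : (EuclideanSpace ℝ (Fin d)) => (t, u)) (hΨ (t, u) (hαS u hu) (ht u hu).1)
      (by fun_prop)).continuousWithinAt
  · intro u hu h0
    have h1 : (τ.symm (Φ (t, u))).val = p.val := by
      have := (smul_eq_zero.1 h0).resolve_left (inv_ne_zero hr.ne')
      exact sub_eq_zero.1 this
    have h2 : τ.symm (Φ (t, u)) = p := Subtype.ext h1
    have h3 : Φ (t, u) = τ p := by rw [← h2, τ.right_inv (ht u hu).1]
    have h4 : 0 ≤ (τ (J (α u))).val 0 := (τ (J (α u))).2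
    have htp : (0:ℝ) < t := htpos
    have h5 : ((τ (J (α u))).val + t • e0 : (EuclideanSpace ℝ (Fin d))) 0 = (τ (J (α u))).val 0 + t := by
      simp [e0]
    have h6 : (Φ (t, u)).val = (τ (J (α u))).val + t • e0 :=
      hJv _ (by rw [h5]; linarith)
    have h7 : (Φ (t, u)).val 0 = (τ (J (α u))).val 0 + t := by rw [h6]; exact h5
    rw [h3, hq0] at h7
    linarith
  · intro u hu
    exact (ht u hu).2.le

theorem stmt6 (d : ℕ) [NeZero d] (M : Type*) [TopologicalSpace M] [Nonempty M] [T2Space M]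
    [ChartedSpace (EuclideanHalfSpace d) M] :
    ∀ x : M, ∀ W ∈ nhds x, ∃ V ∈ nhds x, V ⊆ W ∧
      IsConnected (V ∩ (modelWithCornersEuclideanHalfSpace d).interior M) := by
  intro x W hW
  let e := chartAt (EuclideanHalfSpace d) x
  have hxe : x ∈ e.source := mem_chart_source _ x
  have hint : ∀ y ∈ e.source, (y ∈ (𝓡∂ d).interior M ↔ 0 < (e y).val 0) := by
    intro y hy
    have hdef : y ∈ (𝓡∂ d).interior M ↔ 0 < (chartAt (EuclideanHalfSpace d) y y).val 0 := by
      change extChartAt (𝓡∂ d) y y ∈ interior (range (𝓡∂ d)) ↔ _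
      rw [interior_range_modelWithCornersEuclideanHalfSpace]
      rfl
    rw [hdef]
    have hy' : y ∈ (chartAt (EuclideanHalfSpace d) y).source := mem_chart_source _ y
    have key : ∀ e₁ e₂ : OpenPartialHomeomorph M (EuclideanHalfSpace d), y ∈ e₁.source →
        y ∈ e₂.source → 0 < (e₁ y).val 0 → 0 < (e₂ y).val 0 := by
      intro e₁ e₂ h₁ h₂ h
      have := aux_key d (e₁.symm.trans e₂) (e₁ y) (by simp [h₁, h₂]) h
      simpa [h₁] using this
    exact ⟨key _ _ hy' hy, key _ _ hy hy'⟩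
  let J : (EuclideanSpace ℝ (Fin d)) → EuclideanHalfSpace d := (𝓡∂ d).symm
  have hJ : Continuous J := (𝓡∂ d).continuous_symm
  have hJv : ∀ y : (EuclideanSpace ℝ (Fin d)), 0 ≤ y 0 → (J y).val = y := fun y hy =>
    (𝓡∂ d).right_inv (by rw [range_modelWithCornersEuclideanHalfSpace]; exact hy)
  have hJl : ∀ z : EuclideanHalfSpace d, J z.val = z := fun z => (𝓡∂ d).left_inv z
  -- neighbourhood in the half space
  have hN : e.target ∩ e.symm ⁻¹' W ∈ nhds (e x) := by
    refine Filter.inter_mem (e.open_target.mem_nhds (e.map_source hxe)) ?_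
    refine (e.continuousAt_symm (e.map_source hxe)).preimage_mem_nhds ?_
    rwa [e.left_inv hxe]
  have hN2 : J ⁻¹' (e.target ∩ e.symm ⁻¹' W) ∈ nhds (e x).val := by
    refine hJ.continuousAt.preimage_mem_nhds ?_
    rwa [hJl]
  obtain ⟨r, hr, hrN⟩ := Metric.mem_nhds_iff.1 hN2
  let b : Set (EuclideanSpace ℝ (Fin d)) := Metric.ball (e x).val r
  have hb : ∀ z : EuclideanHalfSpace d, z.val ∈ b → z ∈ e.target ∧ e.symm z ∈ W := by
    intro z hz
    have := hrN hz
    simpa [hJl] using this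
  refine ⟨e.source ∩ {y | (e y).val ∈ b}, ?_, ?_, ?_⟩
  · refine Filter.inter_mem (e.open_source.mem_nhds hxe) ?_
    have : ContinuousAt (fun y => (e y).val) x :=
      ContinuousAt.comp (g := (Subtype.val : EuclideanHalfSpace d → (EuclideanSpace ℝ (Fin d))))
        continuous_subtype_val.continuousAt (e.continuousAt hxe)
    exact this.preimage_mem_nhds (Metric.ball_mem_nhds _ hr)
  · rintro y ⟨hy, hyb⟩
    have := (hb _ hyb).2
    rwa [e.left_inv hy] at this
  · have hset : e.source ∩ {y | (e y).val ∈ b} ∩ (𝓡∂ d).interior M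
        = (fun z => e.symm (J z)) '' (b ∩ {z | 0 < z 0}) := by
      ext y
      constructor
      · rintro ⟨⟨hy, hyb⟩, hyi⟩
        refine ⟨(e y).val, ⟨hyb, (hint y hy).1 hyi⟩, ?_⟩
        simp only [hJl]
        exact e.left_inv hy
      · rintro ⟨z, ⟨hz, hz0⟩, rfl⟩
        have hz0' : 0 < z 0 := hz0
        have hv := hJv z hz0'.le
        have ht := (hb (J z) (by rw [hv]; exact hz)).1
        have hs : e.symm (J z) ∈ e.source := e.map_target ht
        have he : e (e.symm (J z)) = J z := e.right_inv ht
        refine ⟨⟨hs, ?_⟩, (hint _ hs).2 ?_⟩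
        · simp only [mem_ofPred_eq, he, hv]; exact hz
        · rw [he, hv]; exact hz0'
    rw [hset]
    refine IsConnected.image ?_ _ ?_
    · refine ⟨?_, ?_⟩
      · let z : (EuclideanSpace ℝ (Fin d)) := (e x).val + (r / 2) • EuclideanSpace.single 0 (1:ℝ)
        refine ⟨z, ?_, ?_⟩
        · rw [show z ∈ b ↔ _ from mem_ball_iff_norm]
          simp only [z, add_sub_cancel_left, norm_smul, Real.norm_eq_abs]
          rw [abs_of_pos (by positivity)]
          simp [hr]
        · have h1 : 0 ≤ (e x).val 0 := (e x).2
          simp [z]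
          linarith
      · refine (Convex.inter (convex_ball _ _) ?_).isPreconnected
        have := (𝓡∂ d).convex_range.interior
        rwa [interior_range_modelWithCornersEuclideanHalfSpace] at this
    · rintro z ⟨hz, hz0⟩
      have hz0' : 0 < z 0 := hz0
      have ht := (hb (J z) (by rw [hJv z hz0'.le]; exact hz)).1
      exact (ContinuousAt.comp (f := J) (e.continuousAt_symm ht) hJ.continuousAt).continuousWithinAt
end
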